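/- Let q > 2, t ≥ 1, and x, x' ∈ Σ_q^n with x ≠ x' and B_{≤t}(x) ∩ B_{≤t}(x') ≠ ∅. Then there exist t' ∈ {1,…,t} and j ∈ {1,…,t'} such that, writing u = x_{I_{t',j}} and u' = x'_{I_{t',j}} where I_{t',j} = {ℓ ∈ [1,n] : ℓ ≡ j (mod t')}, one has (VT(φ(u)_{[2,|u|]}), Sum(u)) ≠ (VT(φ(u')_{[2,|u'|]}), Sum(u')). In other words, the combined syndrome h̄(x) = (VT(φ(x_{I_{t',j}})_{[2,·]}), Sum(x_{I_{t',j}}))_{1 ≤ j ≤ t' ≤ t} separates any two distinct strings whose burst-deletion balls of radius at most t intersect. -/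

import Mathlib

/-!
Lengths force the two bursts leading to a common string `y` to have the same size `t'`, and `t' ≥ 1`
because `x ≠ x'`. A burst of `t'` symbols removes exactly one symbol from each residue class of
positions modulo `t'` and leaves the residues of the remaining symbols unchanged, so for each `j`
the strings `x_{I_{t',j}}` and `x'_{I_{t',j}}` share a single-deletion descendant
(`residAux_insertion`). If all syndrome components agreed, Tenengolts' theorem (`tenengolts`) would
make these subsequences equal for every `j`, whence `x = x'` (`residAux_ext`).

Tenengolts' theorem is proved as follows. The sums modulo `q` force the two inserted symbols to
coincide. Deleting a symbol from `u` deletes one bit from `φ(u)_{[2,m]}` (`phiTail_insertion`), so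
the Varshamov–Tenengolts theorem (`vt_unique`) gives `φ(u) = φ(u')`. If `u = A a D C` and
`u' = A D a C` have equal ascent patterns, then the word `a D a` is either weakly increasing
or strictly decreasing throughout, so `D` consists of copies of `a` only and `u = u'`.
-/

/-- `burst t' x` is the set `B_{t'}(x)` of strings obtained from `x` by
deleting `t'` consecutive symbols. -/
def burst (t' : ℕ) (x : List ℕ) : Set (List ℕ) :=
  {y | ∃ i, i + t' ≤ x.length ∧ y = x.take i ++ x.drop (i + t')}

/-- `burstLe t x` is the set `B_{≤t}(x) = ∪_{t'=0}^{t} B_{t'}(x)`. -/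
def burstLe (t : ℕ) (x : List ℕ) : Set (List ℕ) :=
  {y | ∃ t' ≤ t, y ∈ burst t' x}

/-- The subsequence `x_{I_{t',j}}` of `x` indexed by the 1-indexed positions
`ℓ ∈ [1, |x|]` with `ℓ ≡ j (mod t')`. -/
def residSub (t' j : ℕ) (x : List ℕ) : List ℕ :=
  ((List.range x.length).filter (fun i => (i + 1) % t' == j % t')).map
    (fun i => x.getD i 0)

/-- The (unreduced) VT weight of a string `c = (c_1, …, c_m)`:
`Σ_{i=1}^m i·c_i`, with 1-indexed positions. -/
def vtSum (c : List ℕ) : ℕ := ∑ i ∈ Finset.range c.length, (i + 1) * c.getD i 0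

/-- For `u ∈ Σ_q^m`, this is `φ(u)_{[2,m]}`: the binary string of length
`m-1` whose `i`-th entry is `1` iff `u_{i+1} ≥ u_i`. -/
def phiTail (u : List ℕ) : List ℕ :=
  List.zipWith (fun a b => if a ≤ b then 1 else 0) u u.tail

/-! ### Weighted sums and the binary Varshamov–Tenengolts theorem -/

lemma sum_range_getD (c : List ℕ) : ∑ i ∈ Finset.range c.length, c.getD i 0 = c.sum := by
  induction c with
  | nil => simp
  | cons a c ih =>
    rw [List.length_cons, Finset.sum_range_succ']
    simp only [List.getD_cons_succ, List.getD_cons_zero, List.sum_cons, ih]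
    omega

lemma vtSum_nil : vtSum [] = 0 := by simp [vtSum]

lemma vtSum_cons (a : ℕ) (c : List ℕ) : vtSum (a :: c) = a + vtSum c + c.sum := by
  unfold vtSum
  rw [List.length_cons, Finset.sum_range_succ', ← sum_range_getD c, add_assoc,
    ← Finset.sum_add_distrib]
  simp only [List.getD_cons_succ, List.getD_cons_zero]
  rw [add_comm]
  congr 1
  · ring
  · exact Finset.sum_congr rfl fun i _ => by ring

lemma vtSum_append (A B : List ℕ) :
    vtSum (A ++ B) = vtSum A + vtSum B + A.length * B.sum := by
  induction A with
  | nil => simp [vtSum_nil]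
  | cons a A ih =>
    simp only [List.cons_append, vtSum_cons, ih, List.sum_append, List.length_cons]
    ring

lemma sum_le_length {D : List ℕ} (h : ∀ d ∈ D, d ≤ 1) : D.sum ≤ D.length := by
  simpa using List.sum_le_card_nsmul D 1 h

lemma eq_replicate_zero {D : List ℕ} (h : D.sum = 0) : D = List.replicate D.length 0 := by
  rw [List.eq_replicate_iff]
  exact ⟨rfl, fun d hd => by have := List.le_sum_of_mem hd; omega⟩

lemma eq_replicate_one {D : List ℕ} (h : ∀ d ∈ D, d ≤ 1) (hs : D.sum = D.length) :
    D = List.replicate D.length 1 := by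
  induction D with
  | nil => rfl
  | cons d D ih =>
    have h1 := h d (by simp)
    have h2 : ∀ e ∈ D, e ≤ 1 := fun e he => h e (by simp [he])
    have h3 := sum_le_length h2
    simp only [List.sum_cons, List.length_cons] at hs
    rw [List.length_cons, List.replicate_succ, ← ih h2 (by omega)]
    congr 1
    omega

lemma cons_replicate_comm (a k : ℕ) (C : List ℕ) :
    a :: (List.replicate k a ++ C) = List.replicate k a ++ a :: C := by
  rw [← List.cons_append, ← List.replicate_succ, List.replicate_succ', List.append_assoc]
  rfl

/-- The difference of the two weights is `(|A| + 1) b + ΣD - (|A| + |D| + 1) b'`, which has absolute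
value below the modulus, and vanishes only if `b = b'` and `D` is constantly `b`. -/
lemma vt_unique_aux {A D C : List ℕ} {b b' m : ℕ} (hD : ∀ d ∈ D, d ≤ 1) (hb : b ≤ 1)
    (hb' : b' ≤ 1) (hm : A.length + D.length + C.length + 2 = m)
    (h : vtSum (A ++ b :: (D ++ C)) ≡ vtSum (A ++ (D ++ b' :: C)) [MOD m]) :
    A ++ b :: (D ++ C) = A ++ (D ++ b' :: C) := by
  have hs := sum_le_length hD
  simp only [vtSum_append, vtSum_cons, List.sum_append, List.sum_cons] at h
  have key : D.sum + (A.length + 1) * b ≡ (A.length + D.length + 1) * b' [MOD m] := by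
    refine Nat.ModEq.add_right_cancel' (vtSum A + vtSum D + vtSum C + D.length * C.sum + C.sum
      + A.length * (D.sum + C.sum)) ?_
    convert h using 1 <;> ring
  interval_cases b <;> interval_cases b'
  · have : D.sum = 0 := by
      refine Nat.ModEq.eq_of_lt_of_lt (m := m) (by simpa using key) (by omega) (by omega)
    rw [eq_replicate_zero this, cons_replicate_comm]
  · have := Nat.ModEq.eq_of_lt_of_lt key (by omega) (by omega)
    omega
  · have := Nat.ModEq.eq_of_lt_of_lt key (by omega) (by omega)
    omega
  · have := Nat.ModEq.eq_of_lt_of_lt key (by omega) (by omega)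
    rw [eq_replicate_one hD (by omega), cons_replicate_comm]

/-- The binary Varshamov–Tenengolts theorem: a single-deletion descendant and the weight modulo
(length + 1) determine a binary string. -/
lemma vt_unique {P Q P' Q' : List ℕ} {b b' m : ℕ} (hw : P ++ Q = P' ++ Q')
    (h1 : ∀ d ∈ P ++ b :: Q, d ≤ 1) (h1' : ∀ d ∈ P' ++ b' :: Q', d ≤ 1)
    (hm : P.length + Q.length + 2 = m)
    (h : vtSum (P ++ b :: Q) ≡ vtSum (P' ++ b' :: Q') [MOD m]) :
    P ++ b :: Q = P' ++ b' :: Q' := by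
  have hb := h1 b (by simp)
  have hb' := h1' b' (by simp)
  rcases List.append_eq_append_iff.1 hw with ⟨D, rfl, rfl⟩ | ⟨D, rfl, rfl⟩
  · rw [List.append_assoc] at h ⊢
    exact vt_unique_aux (fun d hd => h1 d (by simp [hd])) hb hb'
      (by simp only [List.length_append] at hm; omega) h
  · rw [List.append_assoc] at h ⊢
    exact (vt_unique_aux (fun d hd => h1' d (by simp [hd])) hb' hb
      (by simp only [List.length_append] at hm; omega) h.symm).symm

/-! ### Ascent patterns -/

lemma phiTail_cons_cons (a b : ℕ) (u : List ℕ) :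
    phiTail (a :: b :: u) = (if a ≤ b then 1 else 0) :: phiTail (b :: u) := by
  simp [phiTail]

lemma phiTail_singleton (a : ℕ) : phiTail [a] = [] := by simp [phiTail]

lemma length_phiTail (u : List ℕ) : (phiTail u).length = u.length - 1 := by
  simp [phiTail]

lemma phiTail_le_one (u : List ℕ) : ∀ d ∈ phiTail u, d ≤ 1 := by
  induction u with
  | nil => simp [phiTail]
  | cons a u ih =>
    cases u with
    | nil => simp [phiTail]
    | cons b u =>
      rw [phiTail_cons_cons]
      intro d hd
      rcases List.mem_cons.1 hd with rfl | hd
      · split_ifs <;> simp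
      · exact ih d hd

/-- Inserting a symbol into a nonempty string inserts one bit into its ascent pattern. -/
lemma phiTail_insertion (a : ℕ) (A C : List ℕ) (h : A ++ C ≠ []) :
    ∃ P b Q, phiTail (A ++ a :: C) = P ++ b :: Q ∧ phiTail (A ++ C) = P ++ Q := by
  induction A with
  | nil =>
    cases C with
    | nil => simp at h
    | cons c C => exact ⟨[], _, phiTail (c :: C), phiTail_cons_cons _ _ _, rfl⟩
  | cons x A ih =>
    cases A with
    | nil =>
      cases C with
      | nil => exact ⟨[], _, [], by simp [phiTail]; rfl, by simp [phiTail]⟩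
      | cons c C =>
        simp only [List.cons_append, List.nil_append, phiTail_cons_cons]
        -- the bit `[x ≤ c]` equals `[x ≤ a]` or `[a ≤ c]`
        by_cases h1 : (if x ≤ c then 1 else 0) = (if x ≤ a then 1 else 0)
        · exact ⟨[if x ≤ a then 1 else 0], if a ≤ c then 1 else 0, phiTail (c :: C), rfl,
            by rw [h1]; rfl⟩
        · refine ⟨[], if x ≤ a then 1 else 0, (if a ≤ c then 1 else 0) :: phiTail (c :: C), rfl, ?_⟩
          simp only [List.nil_append, List.cons.injEq, and_true]
          split_ifs at h1 ⊢ <;> omega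
    | cons y A =>
      obtain ⟨P, b, Q, h1, h2⟩ := ih (by simp)
      simp only [List.cons_append] at h1 h2 ⊢
      exact ⟨_ :: P, b, Q, by rw [phiTail_cons_cons, h1]; rfl, by rw [phiTail_cons_cons, h2]; rfl⟩

lemma phiTail_cancel {A L L' : List ℕ} (hL : L ≠ []) (hL' : L' ≠ [])
    (h : phiTail (A ++ L) = phiTail (A ++ L')) : phiTail L = phiTail L' := by
  induction A with
  | nil => exact h
  | cons x A ih =>
    apply ih
    obtain ⟨y, M, hM⟩ := List.exists_cons_of_ne_nil (l := A ++ L) (by simp [hL])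
    obtain ⟨y', M', hM'⟩ := List.exists_cons_of_ne_nil (l := A ++ L') (by simp [hL'])
    rw [List.cons_append, List.cons_append, hM, hM', phiTail_cons_cons, phiTail_cons_cons] at h
    rw [hM, hM']
    exact (List.cons.inj h).2

/-- Equality of the shifted patterns propagates the first comparison `e ≤ d` along the whole of
`e, d, D, a`. -/
lemma phiTail_shift (a : ℕ) (C : List ℕ) (D : List ℕ) : ∀ e d : ℕ,
    phiTail (e :: d :: (D ++ C)) = phiTail (d :: (D ++ a :: C)) →
    (e ≤ d → ∀ x ∈ d :: D, e ≤ x ∧ x ≤ a) ∧ (d < e → ∀ x ∈ d :: D, a < x ∧ x < e) := by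
  induction D with
  | nil =>
    intro e d h
    simp only [List.nil_append, phiTail_cons_cons, List.cons.injEq] at h
    have h1 := h.1
    simp only [List.mem_singleton, forall_eq]
    split_ifs at h1 <;> omega
  | cons d' D ih =>
    intro e d h
    rw [List.cons_append, List.cons_append, phiTail_cons_cons, phiTail_cons_cons d d' (D ++ a :: C)]
      at h
    obtain ⟨h1, h2⟩ := List.cons.inj h
    obtain ⟨i1, i2⟩ := ih d d' h2
    constructor
    · intro hed x hx
      have hd : d ≤ d' := by split_ifs at h1 <;> omega
      have hd' := i1 hd d' (by simp)
      rcases List.mem_cons.1 hx with rfl | hx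
      · omega
      · have := i1 hd x hx
        omega
    · intro hed x hx
      have hd : d' < d := by split_ifs at h1 <;> omega
      have hd' := i2 hd d' (by simp)
      rcases List.mem_cons.1 hx with rfl | hx
      · omega
      · have := i2 hd x hx
        omega

lemma insertion_eq_of_phiTail_eq {a : ℕ} {A D C : List ℕ}
    (h : phiTail (A ++ a :: (D ++ C)) = phiTail (A ++ (D ++ a :: C))) :
    A ++ a :: (D ++ C) = A ++ (D ++ a :: C) := by
  have h' := phiTail_cancel (by simp) (by simp) h
  have hD : D = List.replicate D.length a := by
    rw [List.eq_replicate_iff]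
    refine ⟨rfl, ?_⟩
    cases D with
    | nil => simp
    | cons d D =>
      obtain ⟨h1, h2⟩ := phiTail_shift a C D a d h'
      intro x hx
      rcases le_or_gt a d with hd | hd
      · have := h1 hd x hx
        omega
      · have := h2 hd x hx
        omega
  rw [hD, cons_replicate_comm]

/-- Tenengolts' theorem: a string over `Σ_q` is determined by a single-deletion descendant, its sum
modulo `q`, and the weight of its ascent pattern modulo its length. -/
lemma tenengolts {q a a' : ℕ} {A C A' C' : List ℕ} (hw : A ++ C = A' ++ C')
    (ha : a < q) (ha' : a' < q)
    (hs : (A ++ a :: C).sum ≡ (A' ++ a' :: C').sum [MOD q])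
    (hv : vtSum (phiTail (A ++ a :: C)) ≡ vtSum (phiTail (A' ++ a' :: C'))
      [MOD (A ++ a :: C).length]) :
    A ++ a :: C = A' ++ a' :: C' := by
  obtain rfl : a = a' := by
    have hsum := congrArg List.sum hw
    simp only [List.sum_append, List.sum_cons] at hs hsum
    refine Nat.ModEq.eq_of_lt_of_lt (m := q) ?_ ha ha'
    refine Nat.ModEq.add_left_cancel' (A.sum + C.sum) ?_
    convert hs using 1 <;> omega
  have hphi : phiTail (A ++ a :: C) = phiTail (A' ++ a :: C') := by
    by_cases h0 : A ++ C = []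
    · have h0' := hw ▸ h0
      simp only [List.append_eq_nil_iff] at h0 h0'
      simp [h0, h0']
    obtain ⟨P, b, Q, h1, h2⟩ := phiTail_insertion a A C h0
    obtain ⟨P', b', Q', h1', h2'⟩ := phiTail_insertion a A' C' (hw ▸ h0)
    have l1 := congrArg List.length h1
    have hb := phiTail_le_one (A ++ a :: C)
    have hb' := phiTail_le_one (A' ++ a :: C')
    rw [h1] at hb hv ⊢
    rw [h1'] at hb' hv ⊢
    refine vt_unique (by rw [← h2, ← h2', hw]) hb hb' ?_ hv
    rw [length_phiTail] at l1
    simp only [List.length_append, List.length_cons] at l1 ⊢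
    omega
  rcases List.append_eq_append_iff.1 hw with ⟨D, rfl, rfl⟩ | ⟨D, rfl, rfl⟩
  · rw [List.append_assoc] at hphi ⊢
    exact insertion_eq_of_phiTail_eq hphi
  · rw [List.append_assoc] at hphi ⊢
    exact (insertion_eq_of_phiTail_eq hphi.symm).symm

/-! ### Residue classes of positions -/

/-- The subsequence of `x` at the residue class of `j` modulo `t`, when the first symbol of `x` has
position `k + 1`; for `k = 0` this is `residSub t j x`. -/
def residAux (t j : ℕ) : ℕ → List ℕ → List ℕ
  | _, [] => []
  | k, a :: x => if (k + 1) % t = j % t then a :: residAux t j (k + 1) x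
      else residAux t j (k + 1) x

lemma residAux_eq (t j : ℕ) (x : List ℕ) : ∀ k,
    ((List.range x.length).filter (fun i => (k + i + 1) % t == j % t)).map
      (fun i => x.getD i 0) = residAux t j k x := by
  induction x with
  | nil => simp [residAux]
  | cons a x ih =>
    intro k
    rw [residAux, ← ih (k + 1), List.length_cons, List.range_succ_eq_map, List.filter_cons,
      List.filter_map]
    have : ((fun i => (k + i + 1) % t == j % t) ∘ Nat.succ)
        = fun i => (k + 1 + i + 1) % t == j % t := by
      funext i
      simp only [Function.comp, Nat.succ_eq_add_one]
      rw [show k + (i + 1) + 1 = k + 1 + i + 1 by ring]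
    rw [this]
    by_cases h : (k + 1) % t = j % t <;> simp [h, Function.comp_def]

lemma residSub_eq (t j : ℕ) (x : List ℕ) : residSub t j x = residAux t j 0 x := by
  rw [← residAux_eq]
  simp [residSub]

lemma residAux_append (t j : ℕ) (A B : List ℕ) : ∀ k,
    residAux t j k (A ++ B) = residAux t j k A ++ residAux t j (k + A.length) B := by
  induction A with
  | nil => simp [residAux]
  | cons a A ih =>
    intro k
    simp only [List.cons_append, residAux, ih (k + 1), List.length_cons]
    rw [show k + 1 + A.length = k + (A.length + 1) by ring]
    split_ifs <;> rfl

lemma residAux_periodic (t j : ℕ) (A : List ℕ) : ∀ k,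
    residAux t j (k + t) A = residAux t j k A := by
  induction A with
  | nil => simp [residAux]
  | cons a A ih =>
    intro k
    have : (k + t + 1) % t = (k + 1) % t := by
      rw [show k + t + 1 = k + 1 + t by ring, Nat.add_mod_right]
    simp only [residAux, this]
    rw [show k + t + 1 = k + 1 + t by ring, ih (k + 1)]

lemma residAux_eq_nil (t j : ℕ) (A : List ℕ) : ∀ k,
    (∀ i < A.length, (k + i + 1) % t ≠ j % t) → residAux t j k A = [] := by
  induction A with
  | nil => simp [residAux]
  | cons a A ih =>
    intro k h
    rw [residAux, if_neg (by simpa using h 0 (by simp))]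
    refine ih _ fun i hi => ?_
    rw [show k + 1 + i + 1 = k + (i + 1) + 1 by ring]
    exact h (i + 1) (by simpa using hi)

lemma residAux_subset (t j : ℕ) (A : List ℕ) : ∀ k, ∀ a ∈ residAux t j k A, a ∈ A := by
  induction A with
  | nil => simp [residAux]
  | cons b A ih =>
    intro k a ha
    rw [residAux] at ha
    split_ifs at ha
    · rcases List.mem_cons.1 ha with rfl | ha
      · simp
      · simp [ih _ _ ha]
    · simp [ih _ _ ha]

lemma exists_window_index {t : ℕ} (ht : 1 ≤ t) (j k : ℕ) :
    ∃ r < t, (k + r + 1) % t = j % t := by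
  refine ⟨(j + (t - (k + 1) % t)) % t, Nat.mod_lt _ ht, ?_⟩
  have h1 := Nat.mod_lt (k + 1) ht
  have h2 := Nat.mod_add_div (k + 1) t
  rw [show k + (j + (t - (k + 1) % t)) % t + 1 = k + 1 + (j + (t - (k + 1) % t)) % t by ring,
    Nat.add_mod_mod]
  have h3 : k + 1 + (j + (t - (k + 1) % t)) = j + t * ((k + 1) / t + 1) := by
    rw [mul_add, mul_one]
    omega
  rw [h3, Nat.add_mul_mod_self_left]

/-- A window of `t` consecutive positions meets each residue class modulo `t` exactly once. -/
lemma residAux_window {t : ℕ} (ht : 1 ≤ t) (j k : ℕ) (T : List ℕ) (hT : T.length = t) :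
    ∃ b, residAux t j k T = [b] := by
  obtain ⟨r, hr, hrj⟩ := exists_window_index ht j k
  have hne : ∀ i < t, i ≠ r → (k + i + 1) % t ≠ j % t := by
    intro i hi hir h
    apply hir
    have h1 : k + i + 1 ≡ k + r + 1 [MOD t] := h.trans hrj.symm
    exact Nat.ModEq.eq_of_lt_of_lt
      (Nat.ModEq.add_left_cancel' k (Nat.ModEq.add_right_cancel' 1 h1)) hi hr
  have hrT : r < T.length := by omega
  have hsplit : T = T.take r ++ T[r] :: T.drop (r + 1) := by
    rw [← List.drop_eq_getElem_cons hrT, List.take_append_drop]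
  have hlen : (T.take r).length = r := by simp; omega
  refine ⟨T[r], ?_⟩
  conv_lhs => rw [hsplit]
  rw [residAux_append, hlen, residAux, if_pos hrj, residAux_eq_nil, residAux_eq_nil]
  · rfl
  · intro i hi
    rw [show k + r + 1 + i + 1 = k + (r + 1 + i) + 1 by ring]
    simp only [List.length_drop] at hi
    exact hne _ (by omega) (by omega)
  · intro i hi
    rw [hlen] at hi
    exact hne i (by omega) (by omega)

/-- A burst of `t` deletions acts on each residue class modulo `t` as a single deletion. -/
lemma residAux_insertion {t : ℕ} (ht : 1 ≤ t) (j : ℕ) (x : List ℕ) (i : ℕ)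
    (hi : i + t ≤ x.length) : ∃ P b Q, residSub t j x = P ++ b :: Q ∧
      residSub t j (x.take i ++ x.drop (i + t)) = P ++ Q := by
  have hT : ((x.drop i).take t).length = t := by simp; omega
  have hl : (x.take i).length = i := by simp; omega
  have hsplit : x = x.take i ++ ((x.drop i).take t ++ x.drop (i + t)) := by
    rw [← List.drop_drop, List.take_append_drop, List.take_append_drop]
  obtain ⟨b, hb⟩ := residAux_window ht j (0 + i) _ hT
  refine ⟨residAux t j 0 (x.take i), b, residAux t j (0 + i) (x.drop (i + t)), ?_, ?_⟩
  · rw [residSub_eq]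
    conv_lhs => rw [hsplit]
    rw [residAux_append, hl, residAux_append, hT, hb, residAux_periodic]
    rfl
  · rw [residSub_eq, residAux_append, hl]

lemma residAux_ext {t : ℕ} (ht : 1 ≤ t) (x : List ℕ) : ∀ (x' : List ℕ) (k : ℕ),
    x.length = x'.length →
    (∀ j, 1 ≤ j → j ≤ t → residAux t j k x = residAux t j k x') → x = x' := by
  induction x with
  | nil =>
    intro x' k hl _
    exact (List.length_eq_zero_iff.1 hl.symm).symm
  | cons a x ih =>
    intro x' k hl h
    cases x' with
    | nil => simp at hl
    | cons a' x' =>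
      have hk := h (k % t + 1) (by omega) (Nat.mod_lt k ht)
      have hm : (k + 1) % t = (k % t + 1) % t := by simp
      rw [residAux, residAux, if_pos hm, if_pos hm] at hk
      rw [(List.cons.inj hk).1, ih x' (k + 1) (by simpa using hl)]
      intro j h1 h2
      have hj := h j h1 h2
      rw [residAux, residAux] at hj
      split_ifs at hj
      · exact (List.cons.inj hj).2
      · exact hj

/-- the combined syndrome
`h̄(x) = (VT(φ(x_{I_{t',j}})_{[2,·]}), Sum(x_{I_{t',j}}))_{1 ≤ j ≤ t' ≤ t}`
separates distinct strings whose burst-deletion balls of radius `≤ t`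
intersect: if `x ≠ x'` and `B_{≤t}(x) ∩ B_{≤t}(x') ≠ ∅`, then some component
of the syndrome differs.  (For a subsequence `u` of length `m`, the VT
syndrome of `φ(u)_{[2,m]}` is taken modulo `m`, since `φ(u)_{[2,m]}` has
length `m-1`.) -/
theorem combined_syndrome_separates
    (q t n : ℕ) (hq : 2 < q) (ht : 1 ≤ t)
    (x x' : List ℕ) (hx : x.length = n) (hx' : x'.length = n)
    (ha : ∀ a ∈ x, a < q) (ha' : ∀ a ∈ x', a < q)
    (hne : x ≠ x')
    (hball : (burstLe t x ∩ burstLe t x').Nonempty) :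
    ∃ t', 1 ≤ t' ∧ t' ≤ t ∧ ∃ j, 1 ≤ j ∧ j ≤ t' ∧
      ¬(vtSum (phiTail (residSub t' j x)) % (residSub t' j x).length =
          vtSum (phiTail (residSub t' j x')) % (residSub t' j x').length ∧
        (residSub t' j x).sum % q = (residSub t' j x').sum % q) := by
  obtain ⟨y, ⟨s, hs, i, hi, hy⟩, ⟨s', hs', i', hi', hy'⟩⟩ := hball
  have hl := congrArg List.length hy
  have hl' := congrArg List.length hy'
  simp only [List.length_append, List.length_take, List.length_drop] at hl hl'
  obtain rfl : s = s' := by omega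
  have hs1 : 1 ≤ s := by
    by_contra h0
    obtain rfl : s = 0 := by omega
    simp only [add_zero, List.take_append_drop] at hy hy'
    exact hne (hy.symm.trans hy')
  by_contra! hcon
  apply hne
  refine residAux_ext hs1 x x' 0 (by omega) fun j h1 h2 => ?_
  obtain ⟨hv, hsum⟩ := hcon s hs1 hs j h1 h2
  have hm : ∀ a ∈ residSub s j x, a < q := fun a h =>
    ha a (residAux_subset s j x 0 a (by rwa [← residSub_eq]))
  have hm' : ∀ a ∈ residSub s j x', a < q := fun a h =>
    ha' a (residAux_subset s j x' 0 a (by rwa [← residSub_eq]))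
  obtain ⟨P, b, Q, e1, e2⟩ := residAux_insertion hs1 j x i hi
  obtain ⟨P', b', Q', e1', e2'⟩ := residAux_insertion hs1 j x' i' hi'
  have hw : P ++ Q = P' ++ Q' := by rw [← e2, ← e2', ← hy, ← hy']
  rw [← residSub_eq, ← residSub_eq]
  rw [e1] at hv hsum hm ⊢
  rw [e1'] at hv hsum hm' ⊢
  have hlen : (P' ++ b' :: Q').length = (P ++ b :: Q).length := by
    have := congrArg List.length hw
    simp only [List.length_append, List.length_cons] at this ⊢
    omega
  rw [hlen] at hv
  exact tenengolts hw (hm b (by simp)) (hm' b' (by simp)) hsum hv
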